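/- (Main theorem, upper bound.) If K_max is nonempty and R = max{P_τ : τ ∈ K_max}, then for every message length L the key appearance equivocation satisfies H(K | M^L C^L) ≤ log(|K|) · |K_max| · R^L. -/

import Mathlib

open scoped Classical

noncomputable section

/-- Probability of a word under the i.i.d. extension of the symbol distribution `P`. -/
def wordP {M : Type*} (P : M → ℝ) {L : ℕ} (m : Fin L → M) : ℝ := ∏ l, P (m l)

/-- Number of keys in `K` mapping the message `m` (letterwise) to the cryptogram `c`. -/
def keyCount {M : Type*} (K : Subgroup (Equiv.Perm M)) {L : ℕ} (m c : Fin L → M) : ℕ :=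
  Nat.card {k : Equiv.Perm M // k ∈ K ∧ ∀ l, k (m l) = c l}

/-- The key appearance equivocation `H(K | M^L C^L)` for the substitution cipher with
key space `K` (keys uniform), symbol distribution `P` and message length `L`. -/
def kae {M : Type*} [Fintype M] (K : Subgroup (Equiv.Perm M)) (P : M → ℝ) (L : ℕ) : ℝ :=
  ∑ m : Fin L → M, ∑ c : Fin L → M,
    wordP P m * (keyCount K m c : ℝ) / (Nat.card K : ℝ) * Real.log (keyCount K m c)

/-- The fixed set `F(π)` of a permutation. -/
def fixedSet {M : Type*} [Fintype M] [DecidableEq M] (π : Equiv.Perm M) : Finset M :=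
  Finset.univ.filter fun j => π j = j

/-- `P_π`: total probability of the fixed set of `π`. -/
def Pfix {M : Type*} [Fintype M] [DecidableEq M] (P : M → ℝ) (π : Equiv.Perm M) : ℝ :=
  ∑ j ∈ fixedSet π, P j

/-- A key is maximal if it is a non-identity element of `K` whose fixed set is maximal
under inclusion among fixed sets of non-identity elements of `K`. -/
def IsMaximalKey {M : Type*} [Fintype M] [DecidableEq M] (K : Subgroup (Equiv.Perm M))
    (π : Equiv.Perm M) : Prop :=
  π ∈ K ∧ π ≠ 1 ∧ ∀ τ ∈ K, τ ≠ 1 → fixedSet π ⊆ fixedSet τ → fixedSet τ = fixedSet π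

/-- The stabilizer of the message `m` in `K` is nontrivial. -/
def hasNontrivialStab {M : Type*} (K : Subgroup (Equiv.Perm M)) {L : ℕ} (m : Fin L → M) : Prop :=
  ∃ k ∈ K, k ≠ 1 ∧ ∀ l, k (m l) = m l

/-- Total probability of length-`L` messages with a nontrivial stabilizer in `K`. -/
def probNontrivial {M : Type*} [Fintype M] (K : Subgroup (Equiv.Perm M)) (P : M → ℝ)
    (L : ℕ) : ℝ :=
  ∑ m : Fin L → M, if hasNontrivialStab K m then wordP P m else 0

theorem aux_sum_keyCount {M : Type*} [Fintype M] (K : Subgroup (Equiv.Perm M)) {L : ℕ}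
    (m : Fin L → M) : ∑ c : Fin L → M, keyCount K m c = Nat.card K := by
  have h : ∀ c : Fin L → M, keyCount K m c =
      ((Finset.univ : Finset K).filter fun k : K => (fun l => (k : Equiv.Perm M) (m l)) = c).card := by
    intro c
    unfold keyCount
    rw [← Fintype.card_subtype, ← Nat.card_eq_fintype_card]
    refine Nat.card_congr ⟨fun k => ⟨⟨k.1, k.2.1⟩, funext k.2.2⟩,
      fun k => ⟨k.1.1, k.1.2, fun l => congrFun k.2 l⟩, fun _ => rfl, fun _ => rfl⟩
  simp_rw [h]
  rw [← Finset.card_eq_sum_card_fiberwise (fun _ _ => Finset.mem_coe.2 (Finset.mem_univ _)),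
    Finset.card_univ, Nat.card_eq_fintype_card]

theorem aux_keyCount_le {M : Type*} [Fintype M] (K : Subgroup (Equiv.Perm M)) {L : ℕ}
    (m c : Fin L → M) : keyCount K m c ≤ Nat.card K := by
  rw [← aux_sum_keyCount K m]
  exact Finset.single_le_sum (f := fun c => keyCount K m c) (fun _ _ => Nat.zero_le _)
    (Finset.mem_univ c)

theorem aux_log_keyCount {M : Type*} [Fintype M] (K : Subgroup (Equiv.Perm M)) {L : ℕ}
    (m c : Fin L → M) : Real.log (keyCount K m c) ≤
      if hasNontrivialStab K m then Real.log (Nat.card K) else 0 := by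
  have hle := aux_keyCount_le K m c
  split_ifs with h
  · rcases Nat.eq_zero_or_pos (keyCount K m c) with h0 | h0
    · rw [h0]; simpa using Real.log_natCast_nonneg (Nat.card K)
    · exact Real.log_le_log (by exact_mod_cast h0) (by exact_mod_cast hle)
  · have h1 : keyCount K m c ≤ 1 := by
      unfold keyCount
      rw [Finite.card_le_one_iff_subsingleton]
      refine ⟨fun a b => Subtype.ext ?_⟩
      by_contra hne
      refine h ⟨a.1⁻¹ * b.1, K.mul_mem (K.inv_mem a.2.1) b.2.1, fun e => hne ?_, fun l => ?_⟩
      · exact inv_mul_eq_one.1 e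
      · rw [Equiv.Perm.mul_apply, b.2.2 l, ← a.2.2 l]; simp
    exact Real.log_nonpos (Nat.cast_nonneg _) (by exact_mod_cast h1)

theorem aux_exists_max {M : Type*} [Fintype M] [DecidableEq M] (K : Subgroup (Equiv.Perm M))
    {k : Equiv.Perm M} (hk : k ∈ K) (h1 : k ≠ 1) :
    ∃ τ, IsMaximalKey K τ ∧ fixedSet k ⊆ fixedSet τ := by
  obtain ⟨τ, hτ, hm⟩ := Finset.exists_max_image
    ((Finset.univ : Finset (Equiv.Perm M)).filter
      fun t => t ∈ K ∧ t ≠ 1 ∧ fixedSet k ⊆ fixedSet t) (fun t => (fixedSet t).card)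
    ⟨k, by simp [hk, h1]⟩
  simp only [Finset.mem_filter, Finset.mem_univ, true_and] at hτ hm
  refine ⟨τ, ⟨hτ.1, hτ.2.1, fun σ hσ hσ1 hs => ?_⟩, hτ.2.2⟩
  exact (Finset.eq_of_subset_of_card_le hs (hm σ ⟨hσ, hσ1, hτ.2.2.trans hs⟩)).symm

theorem aux_sum_word {M : Type*} [Fintype M] [DecidableEq M] (P : M → ℝ) (L : ℕ)
    (F : Finset M) :
    ∑ m : Fin L → M, (if ∀ l, m l ∈ F then wordP P m else 0) = (∑ j ∈ F, P j) ^ L := by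
  have h := Finset.prod_univ_sum (fun _ : Fin L => F) (fun _ j => P j)
  rw [Finset.prod_const, Finset.card_univ, Fintype.card_fin] at h
  rw [h, ← Finset.sum_filter]
  refine Finset.sum_congr ?_ fun _ _ => rfl
  ext m
  simp

/-- Main theorem, upper bound: `H(K | M^L C^L) ≤ log|K| · |K_max| · R^L`. -/
theorem kae_upper_bound {M : Type*} [Fintype M] [DecidableEq M]
    (K : Subgroup (Equiv.Perm M)) (P : M → ℝ)
    (hP : ∀ x, 0 ≤ P x) (hsum : ∑ x, P x = 1) (L : ℕ) (R : ℝ)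
    (hmax : ∀ τ, IsMaximalKey K τ → Pfix P τ ≤ R)
    (hex : ∃ τ, IsMaximalKey K τ ∧ Pfix P τ = R) :
    kae K P L ≤ Real.log (Nat.card K) *
      (Nat.card {τ : Equiv.Perm M // IsMaximalKey K τ}) * R ^ L := by
  have hw : ∀ m : Fin L → M, 0 ≤ wordP P m := fun m => Finset.prod_nonneg fun l _ => hP _
  have hlog : 0 ≤ Real.log (Nat.card K) := Real.log_natCast_nonneg _
  have hK : (0 : ℝ) < Nat.card K := by exact_mod_cast Nat.card_pos
  have h1 : kae K P L ≤ Real.log (Nat.card K) * probNontrivial K P L := by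
    unfold kae probNontrivial
    rw [Finset.mul_sum]
    refine Finset.sum_le_sum fun m _ => ?_
    calc _ ≤ ∑ c : Fin L → M, wordP P m * (keyCount K m c : ℝ) / (Nat.card K : ℝ) *
          (if hasNontrivialStab K m then Real.log (Nat.card K) else 0) := by
            refine Finset.sum_le_sum fun c _ =>
              mul_le_mul_of_nonneg_left (aux_log_keyCount K m c) ?_
            have := hw m
            positivity
      _ = wordP P m * (if hasNontrivialStab K m then Real.log (Nat.card K) else 0) := by
            rw [← Finset.sum_mul, ← Finset.sum_div, ← Finset.mul_sum, ← Nat.cast_sum,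
              aux_sum_keyCount, mul_div_cancel_right₀ _ hK.ne']
      _ ≤ _ := by split_ifs <;> simp [mul_comm]
  have h2 : probNontrivial K P L ≤
      (Nat.card {τ : Equiv.Perm M // IsMaximalKey K τ}) * R ^ L := by
    calc probNontrivial K P L
        ≤ ∑ m : Fin L → M, ∑ τ : {τ : Equiv.Perm M // IsMaximalKey K τ},
            (if ∀ l, m l ∈ fixedSet τ.1 then wordP P m else 0) := by
          refine Finset.sum_le_sum fun m _ => ?_
          have hnn : ∀ τ : {τ : Equiv.Perm M // IsMaximalKey K τ},
              0 ≤ (if ∀ l, m l ∈ fixedSet τ.1 then wordP P m else 0) := by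
            intro τ; split_ifs <;> simp [hw]
          split_ifs with h
          · obtain ⟨k, hk, hk1, hkm⟩ := h
            obtain ⟨τ, hτ, hs⟩ := aux_exists_max K hk hk1
            have hf : ∀ l, m l ∈ fixedSet τ := fun l => hs (by simp [fixedSet, hkm l])
            have := Finset.single_le_sum (f := fun τ : {τ : Equiv.Perm M // IsMaximalKey K τ} =>
              (if ∀ l, m l ∈ fixedSet τ.1 then wordP P m else 0)) (fun τ _ => hnn τ)
              (Finset.mem_univ ⟨τ, hτ⟩)
            simpa only [if_pos hf] using this
          · exact Finset.sum_nonneg fun τ _ => hnn τ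
      _ = ∑ τ : {τ : Equiv.Perm M // IsMaximalKey K τ}, (Pfix P τ.1) ^ L := by
          rw [Finset.sum_comm]
          refine Finset.sum_congr rfl fun τ _ => ?_
          rw [Pfix, ← aux_sum_word]
      _ ≤ ∑ τ : {τ : Equiv.Perm M // IsMaximalKey K τ}, R ^ L :=
          Finset.sum_le_sum fun τ _ =>
            pow_le_pow_left₀ (Finset.sum_nonneg fun j _ => hP j) (hmax _ τ.2) L
      _ = _ := by
          rw [Finset.sum_const, Finset.card_univ, nsmul_eq_mul, Nat.card_eq_fintype_card]
  rw [mul_assoc]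
  exact h1.trans (mul_le_mul_of_nonneg_left h2 hlog)
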